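/- arXiv:2505.07795 — 2 statements merged into one kernel-verified Lean document; each statement's English description precedes it below -/
import Mathlib

section
/- Let D_A, D₂, D_C ≥ 1 and k ≥ 1 be integers, and let ψ be a Haar-random unit vector in ℂ^{D_A} ⊗ ℂ^{D₂} ⊗ ℂ^{D_C} (i.e., distributed as U e₁ for U Haar distributed on U(D_A D₂ D_C) and e₁ a fixed unit vector). Fix an orthonormal basis {|α⟩ : α = 1, …, D_C} of ℂ^{D_C}, and for each α set ψ̃_α = (I ⊗ ⟨α|) ψ ∈ ℂ^{D_A} ⊗ ℂ^{D₂} and P_α = ‖ψ̃_α‖². Then the expectation over ψ of the k-th moment of the mixed state projected ensemble equals the k-th moment of the generalized Hilbert–Schmidt ensemble: E_ψ [ Σ_{α : P_α > 0} P_α^{1−k} (Tr_{D₂}(|ψ̃_α⟩⟨ψ̃_α|))^{⊗k} ] = ((D_A D₂ − 1)!/(D_A D₂ + k − 1)!) Σ_{g ∈ S_k} D₂^{l(g)} P_{D_A}(g). -/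
open Matrix MeasureTheory

/-- The Borel σ-algebra on matrices. -/
noncomputable instance matrixMeasurableSpace {m n : Type*} :
    MeasurableSpace (Matrix m n ℂ) := borel _

/-- Number of cycles of a permutation, counting fixed points as cycles of length 1. -/
def cycleCount {k : ℕ} (g : Equiv.Perm (Fin k)) : ℕ :=
  g.cycleType.card + (k - g.support.card)

/-- The permutation operator `P_D(g)` on `(ℂ^D)^{⊗k}`. -/
def permMatrix (D : ℕ) {k : ℕ} (g : Equiv.Perm (Fin k)) :
    Matrix (Fin k → Fin D) (Fin k → Fin D) ℂ :=
  fun r c => if r = fun a => c (g a) then 1 else 0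

/-- The `k`-fold tensor power `M^{⊗k}` of a `D × D` matrix. -/
def tensorPow {D k : ℕ} (M : Matrix (Fin D) (Fin D) ℂ) :
    Matrix (Fin k → Fin D) (Fin k → Fin D) ℂ :=
  fun r c => ∏ a, M (r a) (c a)

/-- The projected (unnormalized) vector `ψ̃_α = (I ⊗ ⟨α|) ψ` on `ℂ^{D_A} ⊗ ℂ^{D₂}`. -/
def projVec {DA D2 DC : ℕ} (ψ : (Fin DA × Fin D2) × Fin DC → ℂ) (α : Fin DC) :
    Fin DA × Fin D2 → ℂ :=
  fun x => ψ (x, α)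

/-- `P_α = ‖ψ̃_α‖²`. -/
noncomputable def bornP {DA D2 : ℕ} (φ : Fin DA × Fin D2 → ℂ) : ℝ :=
  ∑ x, Complex.normSq (φ x)

/-- The partial trace `Tr_{D₂}(|φ⟩⟨φ|)` over the `ℂ^{D₂}` factor of the (unnormalized)
projector onto `φ ∈ ℂ^{D_A} ⊗ ℂ^{D₂}`. -/
noncomputable def ptraceOuter {DA D2 : ℕ} (φ : Fin DA × Fin D2 → ℂ) :
    Matrix (Fin DA) (Fin DA) ℂ :=
  fun i j => ∑ b : Fin D2, φ (i, b) * (starRingEnd ℂ) (φ (j, b))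


/-- The Haar-random pure state `ψ = U e₁`. -/
noncomputable def psiVec {DA D2 DC : ℕ}
    (U : ↥(Matrix.unitaryGroup ((Fin DA × Fin D2) × Fin DC) ℂ))
    (e₁ : (Fin DA × Fin D2) × Fin DC → ℂ) : (Fin DA × Fin D2) × Fin DC → ℂ :=
  (U : Matrix ((Fin DA × Fin D2) × Fin DC) ((Fin DA × Fin D2) × Fin DC) ℂ) *ᵥ e₁


section algebra
variable {n : Type*} [Fintype n] [DecidableEq n] {k : ℕ}

theorem collapse_sum (f : Fin k → n) (a : Fin k) (w : n → ℂ) (F : (Fin k → n) → ℂ) :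
    ∑ f' : Fin k → n, ((∏ b ∈ Finset.univ.erase a, (1 : Matrix n n ℂ) (f b) (f' b)) * w (f' a)) * F f'
      = ∑ z, w z * F (Function.update f a z) := by
  symm
  apply Finset.sum_of_injOn (fun z => Function.update f a z)
  · intro z _ z' _ h
    simpa using congrFun h a
  · intro z _; simp
  · intro f' _ hf'
    have : ∃ b, b ≠ a ∧ f b ≠ f' b := by
      by_contra! hh
      apply hf'
      refine ⟨f' a, by simp, ?_⟩
      funext b
      by_cases hb : b = a
      · subst hb; simp
      · simp [hb, hh b hb]
    obtain ⟨b, hb, hfb⟩ := this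
    rw [Finset.prod_eq_zero (i := b) (by simp [hb]) (by simp [hfb])]
    simp
  · intro z _
    rw [Finset.prod_eq_one]
    · simp
    · intro b hb
      have hne := Finset.ne_of_mem_erase hb
      show (1 : Matrix n n ℂ) (f b) (Function.update f a z b) = 1
      rw [Function.update_of_ne hne, Matrix.one_apply_eq]

open scoped Matrix.Norms.L2Operator in
theorem exp_curve (X : Matrix n n ℂ) (hX : Xᴴ = -X) :
    ∃ V : ℝ → Matrix n n ℂ, (∀ t, V t ∈ Matrix.unitaryGroup n ℂ) ∧ V 0 = 1 ∧
      ∀ x y, HasDerivAt (fun t => V t x y) (X x y) 0 := by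
  let : NormedAlgebra ℝ (Matrix n n ℂ) := NormedAlgebra.restrictScalars ℝ ℂ _
  let : NormedAlgebra ℚ (Matrix n n ℂ) := NormedAlgebra.restrictScalars ℚ ℂ _
  refine ⟨fun t => NormedSpace.exp (t • X), ?_, ?_, ?_⟩
  · intro t
    apply NormedSpace.exp_mem_unitary_of_mem_skewAdjoint
    rw [skewAdjoint.mem_iff]
    simp [Matrix.star_eq_conjTranspose, hX]
  · simp
  · intro x y
    have h := hasDerivAt_exp_smul_const (𝕂 := ℝ) X 0
    simp at h
    have h2 := (ContinuousLinearMap.hasFDerivAt (⟨(Matrix.entryLinearMap ℝ ℂ x y), 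
       (continuous_id.matrix_elem x y)⟩ : Matrix n n ℂ →L[ℝ] ℂ)).comp_hasDerivAt (0:ℝ) h
    exact h2

theorem inf_inv (T : (Fin k → n) → (Fin k → n) → ℂ)
    (hT : ∀ V ∈ Matrix.unitaryGroup n ℂ, ∀ i j, T i j =
      ∑ i' : Fin k → n, ∑ j' : Fin k → n, (∏ a, V (i a) (i' a)) * (∏ a, star (V (j a) (j' a))) * T i' j')
    (X : Matrix n n ℂ) (hX : Xᴴ = -X) (i j : Fin k → n) :
    ∑ a, ∑ z, X (i a) z * T (Function.update i a z) j =
      ∑ b, ∑ z, X z (j b) * T i (Function.update j b z) := by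
  obtain ⟨V, hV, hV0, hd⟩ := exp_curve X hX
  have hds : ∀ x y, HasDerivAt (fun t => star (V t x y)) (-(X y x)) 0 := by
    intro x y
    have := (hd x y).star
    rw [show -(X y x) = star (X x y) from (congrFun (congrFun hX y) x).symm]
    exact this
  have h1 : ∀ i' : Fin k → n, HasDerivAt (fun t => ∏ a, V t (i a) (i' a))
      (∑ a, (∏ b ∈ Finset.univ.erase a, (1 : Matrix n n ℂ) (i b) (i' b)) * X (i a) (i' a)) 0 := by
    intro i'
    have := HasDerivAt.fun_finsetProd (u := Finset.univ) (fun a (_ : a ∈ Finset.univ) => hd (i a) (i' a))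
    simpa [hV0] using this
  have h2 : ∀ j' : Fin k → n, HasDerivAt (fun t => ∏ a, star (V t (j a) (j' a)))
      (∑ a, (∏ b ∈ Finset.univ.erase a, (1 : Matrix n n ℂ) (j b) (j' b)) * -(X (j' a) (j a))) 0 := by
    intro j'
    have := HasDerivAt.fun_finsetProd (u := Finset.univ) (fun a (_ : a ∈ Finset.univ) => hds (j a) (j' a))
    have e : ∀ x y : n, star ((1 : Matrix n n ℂ) x y) = (1 : Matrix n n ℂ) x y := by
      intro x y; by_cases h : x = y <;> simp [Matrix.one_apply, h]
    simp only [hV0, e, smul_eq_mul] at this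
    exact this
  have h3 := HasDerivAt.fun_sum (u := Finset.univ) (fun i' (_ : i' ∈ Finset.univ) =>
    HasDerivAt.fun_sum (u := Finset.univ) (fun j' (_ : j' ∈ Finset.univ) =>
      ((h1 i').mul (h2 j')).mul_const (T i' j')))
  have h4 := h3.unique (f₁' := 0) (by
    have : HasDerivAt (fun _ : ℝ => T i j) 0 0 := hasDerivAt_const _ _
    refine this.congr_of_eventuallyEq (Filter.Eventually.of_forall fun t => ?_)
    rw [hT (V t) (hV t) i j]
    rfl)
  have p1 : ∀ f f' : Fin k → n, ∏ a, (1 : Matrix n n ℂ) (f a) (f' a) = if f = f' then 1 else 0 := by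
    intro f f'
    split_ifs with h
    · subst h; simp
    · obtain ⟨a, ha⟩ := Function.ne_iff.mp h
      exact Finset.prod_eq_zero (Finset.mem_univ a) (by simp [Matrix.one_apply, ha])
  have p2 : ∀ f f' : Fin k → n, ∏ a, star ((1 : Matrix n n ℂ) (f a) (f' a)) = if f = f' then 1 else 0 := by
    intro f f'
    rw [← p1]
    apply Finset.prod_congr rfl
    intro a _
    by_cases h : f a = f' a <;> simp [Matrix.one_apply, h]
  simp only [hV0, p1, p2, add_mul, Finset.sum_add_distrib, ite_mul, mul_ite, zero_mul, mul_zero,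
    one_mul, mul_one, Finset.sum_ite_eq, Finset.mem_univ, if_true] at h4
  have q1 : ∑ x : Fin k → n, (∑ a, (∏ b ∈ Finset.univ.erase a, (1 : Matrix n n ℂ) (i b) (x b)) * X (i a) (x a)) * T x j
      = ∑ a, ∑ z, X (i a) z * T (Function.update i a z) j := by
    simp only [Finset.sum_mul]
    rw [Finset.sum_comm]
    exact Finset.sum_congr rfl fun a _ => collapse_sum i a (fun z => X (i a) z) (fun x => T x j)
  have q2 : ∑ x : Fin k → n, (∑ a, (∏ b ∈ Finset.univ.erase a, (1 : Matrix n n ℂ) (j b) (x b)) * -X (x a) (j a)) * T i x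
      = - ∑ a, ∑ z, X z (j a) * T i (Function.update j a z) := by
    simp only [Finset.sum_mul]
    rw [Finset.sum_comm, ← Finset.sum_neg_distrib]
    refine Finset.sum_congr rfl fun a _ => ?_
    rw [collapse_sum j a (fun z => -X z (j a)) (fun x => T i x)]
    simp
  have h5 : (∑ x : Fin k → n, (∑ a, (∏ b ∈ Finset.univ.erase a, (1 : Matrix n n ℂ) (i b) (x b)) * X (i a) (x a)) * T x j) +
     ∑ x : Fin k → n, (∑ a, (∏ b ∈ Finset.univ.erase a, (1 : Matrix n n ℂ) (j b) (x b)) * -X (x a) (j a)) * T i x = 0 := by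
    rw [← h4]
    congr 1
    rw [Finset.sum_comm]
    simp
  rw [q1, q2] at h5
  linear_combination h5

theorem inf_inv_all (T : (Fin k → n) → (Fin k → n) → ℂ)
    (hT : ∀ V ∈ Matrix.unitaryGroup n ℂ, ∀ i j, T i j =
      ∑ i' : Fin k → n, ∑ j' : Fin k → n, (∏ a, V (i a) (i' a)) * (∏ a, star (V (j a) (j' a))) * T i' j')
    (X : Matrix n n ℂ) (i j : Fin k → n) :
    ∑ a, ∑ z, X (i a) z * T (Function.update i a z) j =
      ∑ b, ∑ z, X z (j b) * T i (Function.update j b z) := by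
  have h1 := inf_inv T hT (X - Xᴴ) (by simp) i j
  have h2 := inf_inv T hT (Complex.I • (X + Xᴴ)) (by 
    rw [conjTranspose_smul]; simp [add_comm]) i j
  simp only [Matrix.sub_apply, Matrix.add_apply, Matrix.smul_apply, smul_eq_mul, sub_mul, add_mul, mul_assoc,
    Finset.sum_sub_distrib, Finset.sum_add_distrib, ← Finset.mul_sum] at h1 h2
  have h2' := mul_left_cancel₀ Complex.I_ne_zero h2
  linear_combination (h1 + h2') / 2

theorem unit_inv (T : (Fin k → n) → (Fin k → n) → ℂ)
    (hT : ∀ V ∈ Matrix.unitaryGroup n ℂ, ∀ i j, T i j =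
      ∑ i' : Fin k → n, ∑ j' : Fin k → n, (∏ a, V (i a) (i' a)) * (∏ a, star (V (j a) (j' a))) * T i' j')
    (x y : n) (i j : Fin k → n) :
    ∑ a, (if i a = y then T (Function.update i a x) j else 0) =
      ∑ b, (if j b = x then T i (Function.update j b y) else 0) := by
  have := inf_inv_all T hT (Matrix.single y x 1) i j
  simp only [Matrix.single_apply, ite_and, ite_mul, one_mul, zero_mul] at this
  convert this using 2 with a _ a _
  · by_cases h : i a = y
    · simp [h]
    · simp [h, Ne.symm h]
  · by_cases h : j a = x
    · simp [h]
    · simp [h, Ne.symm h]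

/-- Recursion step. -/
theorem rec_step (T : (Fin (k+1) → n) → (Fin (k+1) → n) → ℂ) (T' : (Fin k → n) → (Fin k → n) → ℂ)
    (hT : ∀ V ∈ Matrix.unitaryGroup n ℂ, ∀ i j, T i j =
      ∑ i' : Fin (k+1) → n, ∑ j' : Fin (k+1) → n,
        (∏ a, V (i a) (i' a)) * (∏ a, star (V (j a) (j' a))) * T i' j')
    (hs1 : ∀ i j (g : Equiv.Perm (Fin (k+1))), T (i ∘ g) j = T i j)
    (hs2 : ∀ i j (g : Equiv.Perm (Fin (k+1))), T i (j ∘ g) = T i j)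
    (htr : ∀ i j, ∑ y, T (Fin.cons y i) (Fin.cons y j) = T' i j)
    (x : n) (i : Fin k → n) (j : Fin (k+1) → n) :
    ((Fintype.card n : ℂ) + k) * T (Fin.cons x i) j =
      ∑ b, if j b = x then T' i (fun a => j (Equiv.swap 0 b a.succ)) else 0 := by
  have h : ∀ y, _ := fun y => unit_inv T hT x y (Fin.cons y i) j
  have hsum := Finset.sum_congr (s₁ := Finset.univ) rfl (fun y _ => h y)
  have e1 : ∀ a : Fin k, T (Function.update (Fin.cons (i a) i : Fin (k+1) → n) a.succ x) j = T (Fin.cons x i) j := by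
    intro a
    rw [← hs1 _ _ (Equiv.swap 0 a.succ)]
    congr 1
    funext b
    refine Fin.cases ?_ (fun b => ?_) b
    · simp
    · by_cases hb : b = a
      · subst hb
        simp [Function.update_apply, (Fin.succ_ne_zero _).symm]
      · have : b.succ ≠ a.succ := by simpa using hb
        simp [Equiv.swap_apply_of_ne_of_ne (Fin.succ_ne_zero _) this, this, hb]
  have e2 : ∀ (b : Fin (k+1)) (y : n), T (Fin.cons y i) (Function.update j b y) =
      T (Fin.cons y i) (Fin.cons y (fun a => j (Equiv.swap 0 b a.succ))) := by
    intro b y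
    rw [← hs2 _ _ (Equiv.swap 0 b)]
    congr 1
    funext c
    refine Fin.cases ?_ (fun c => ?_) c
    · simp
    · have : Equiv.swap 0 b c.succ ≠ b := by
        intro h
        have h' : Equiv.swap 0 b c.succ = Equiv.swap 0 b 0 := by simpa using h
        exact Fin.succ_ne_zero _ ((Equiv.swap 0 b).injective h')
      simp [Function.update_of_ne this]
  have l : ∑ y, ∑ a, (if (Fin.cons y i : Fin (k+1) → n) a = y then T (Function.update (Fin.cons y i) a x) j else 0)
      = ((Fintype.card n : ℂ) + k) * T (Fin.cons x i) j := by
    simp only [Fin.sum_univ_succ, Fin.cons_zero, Fin.cons_succ, if_true, Finset.sum_add_distrib]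
    rw [Finset.sum_comm (s := Finset.univ (α := n))]
    simp [e1, add_mul]
  have r : ∑ y, ∑ b, (if j b = x then T (Fin.cons y i) (Function.update j b y) else 0) =
    ∑ b, if j b = x then T' i (fun a => j (Equiv.swap 0 b a.succ)) else 0 := by
    rw [Finset.sum_comm]
    refine Finset.sum_congr rfl fun b _ => ?_
    split_ifs with hb
    · rw [← htr]
      exact Finset.sum_congr rfl fun y _ => e2 b y
    · simp
  rw [← l, ← r]
  exact hsum

/-- Sum over permutations of delta products. -/
def permDelta (k : ℕ) (i j : Fin k → n) : ℂ :=
  ∑ g : Equiv.Perm (Fin k), if i = (fun a => j (g a)) then 1 else 0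

theorem permDelta_succ (x : n) (i : Fin k → n) (j : Fin (k+1) → n) :
    permDelta (k+1) (Fin.cons x i) j =
     ∑ b, if j b = x then permDelta k i (fun a => j (Equiv.swap 0 b a.succ)) else 0 := by
  unfold permDelta
  rw [← Equiv.sum_comp (Equiv.Perm.decomposeFin (n := k)).symm, Fintype.sum_prod_type]
  refine Finset.sum_congr rfl fun b _ => ?_
  by_cases hb : j b = x
  · simp only [hb, if_true]
    refine Finset.sum_congr rfl fun g _ => ?_
    refine if_congr ?_ rfl rfl
    constructor
    · intro h
      funext a
      have := congrFun h a.succ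
      simpa using this
    · intro h
      funext a
      refine Fin.cases ?_ (fun a => ?_) a
      · simp [hb]
      · simpa using congrFun h a
  · simp only [hb, if_false]
    refine Finset.sum_eq_zero fun g _ => if_neg ?_
    intro h
    have := congrFun h 0
    simp at this
    exact hb this.symm

theorem moment_formula (T : ∀ k, (Fin k → n) → (Fin k → n) → ℂ)
    (hn : 1 ≤ Fintype.card n)
    (hT : ∀ k, ∀ V ∈ Matrix.unitaryGroup n ℂ, ∀ i j, T k i j =
      ∑ i' : Fin k → n, ∑ j' : Fin k → n,
        (∏ a, V (i a) (i' a)) * (∏ a, star (V (j a) (j' a))) * T k i' j')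
    (hs1 : ∀ k i j (g : Equiv.Perm (Fin k)), T k (i ∘ g) j = T k i j)
    (hs2 : ∀ k i j (g : Equiv.Perm (Fin k)), T k i (j ∘ g) = T k i j)
    (htr : ∀ k i j, ∑ y, T (k+1) (Fin.cons y i) (Fin.cons y j) = T k i j) (E : ℂ)
    (h0 : ∀ i j, T 0 i j = E) (k : ℕ) (i j : Fin k → n) :
    T k i j = E * (((Fintype.card n - 1).factorial : ℂ) / ((Fintype.card n + k - 1).factorial : ℂ)) *
      permDelta k i j := by
  induction k with
  | zero => 
    have : ((Fintype.card n - 1).factorial : ℂ) ≠ 0 := by exact_mod_cast Nat.factorial_ne_zero _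
    have e : ∀ g : Equiv.Perm (Fin 0), i = fun a => j (g a) := fun g => Subsingleton.elim _ _
    simp [h0, permDelta, ← e, this]
  | succ k ih =>
    obtain ⟨x, i, rfl⟩ : ∃ x i', i = Fin.cons x i' := ⟨i 0, Fin.tail i, (Fin.cons_self_tail i).symm⟩
    have h := rec_step (T (k+1)) (T k) (hT _) (hs1 _) (hs2 _) (htr _) x i j
    rw [permDelta_succ]
    obtain ⟨m, hm⟩ : ∃ m, Fintype.card n = m + 1 := ⟨Fintype.card n - 1, by omega⟩
    have hne : ((Fintype.card n : ℂ) + k) ≠ 0 := by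
      rw [hm]; norm_cast; omega
    have hf : ((Fintype.card n + (k+1) - 1).factorial : ℂ) = ((Fintype.card n : ℂ) + k) * ((Fintype.card n + k - 1).factorial : ℂ) := by
      rw [hm, show m + 1 + (k+1) - 1 = (m + k) + 1 by omega, show m + 1 + k - 1 = m + k by omega, Nat.factorial_succ]
      push_cast; ring
    apply mul_left_cancel₀ hne
    rw [h, hf]
    simp only [ih]
    have hf0 : ((Fintype.card n + k - 1).factorial : ℂ) ≠ 0 := by exact_mod_cast Nat.factorial_ne_zero _
    simp only [← mul_ite_zero, ← Finset.mul_sum]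
    field_simp
end algebra

theorem card_invariant {k D : ℕ} (g : Equiv.Perm (Fin k)) :
    (Finset.univ.filter (fun b : Fin k → Fin D => b = fun a => b (g a))).card
      = D ^ (g.cycleType.card + (k - g.support.card)) := by
  classical
  have hC : Fintype.card (g.cycleFactorsFinset ⊕ {x // x ∈ g.supportᶜ}) = g.cycleType.card + (k - g.support.card) := by
    simp only [Fintype.card_sum, Fintype.card_coe, Finset.card_compl, Fintype.card_fin,
      Equiv.Perm.cycleType_def, Multiset.card_map]
    rfl
  let cl : Fin k → g.cycleFactorsFinset ⊕ {x // x ∈ g.supportᶜ} := fun x => if h : x ∈ g.support then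
    Sum.inl ⟨g.cycleOf x, Equiv.Perm.cycleOf_mem_cycleFactorsFinset_iff.mpr h⟩
    else Sum.inr ⟨x, by simpa using h⟩
  have clg : ∀ x, cl (g x) = cl x := by
    intro x
    by_cases h : x ∈ g.support
    · have h' : g x ∈ g.support := Equiv.Perm.apply_mem_support.mpr h
      simp only [cl, h, h', dif_pos, Sum.inl.injEq, Subtype.mk.injEq]
      exact Equiv.Perm.cycleOf_self_apply g x
    · have : g x = x := by simpa using h
      rw [this]
  have cls : Function.Surjective cl := by
    rintro (⟨c, hc⟩ | ⟨x, hx⟩)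
    · have hc' := (Equiv.Perm.mem_cycleFactorsFinset_iff.mp hc).1
      obtain ⟨x, hx⟩ := hc'.nonempty_support
      have hxg := Equiv.Perm.mem_cycleFactorsFinset_support_le hc hx
      refine ⟨x, ?_⟩
      simp only [cl, hxg, dif_pos, Sum.inl.injEq, Subtype.mk.injEq]
      exact (Equiv.Perm.cycle_is_cycleOf hx hc).symm
    · refine ⟨x, ?_⟩
      have : x ∉ g.support := by simpa using hx
      simp only [cl, this]
      simp
  have clsame : ∀ x y, cl x = cl y → g.SameCycle x y := by
    intro x y h
    by_cases hx : x ∈ g.support <;> by_cases hy : y ∈ g.support <;>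
      simp only [cl, hx, hy, dif_pos, dif_neg, not_false_eq_true, Sum.inl.injEq, Sum.inr.injEq, Subtype.mk.injEq, reduceCtorEq] at h
    · exact (Equiv.Perm.sameCycle_iff_cycleOf_eq_of_mem_support hx hy).mpr h
    · subst h; exact Equiv.Perm.SameCycle.refl _ _
  rw [← hC]
  have : D ^ Fintype.card (g.cycleFactorsFinset ⊕ {x // x ∈ g.supportᶜ}) = Fintype.card ((g.cycleFactorsFinset ⊕ {x // x ∈ g.supportᶜ}) → Fin D) := by simp
  rw [this, ← Finset.card_univ]
  symm
  apply Finset.card_bij (fun f _ => f ∘ cl)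
  · intro f _
    simp only [Finset.mem_filter, Finset.mem_univ, true_and]
    funext a
    simp [clg]
  · intro f _ f' _ h
    exact cls.injective_comp_right h
  · intro b hb
    simp only [Finset.mem_filter, Finset.mem_univ, true_and] at hb
    have hz : ∀ (m : ℕ) x, b ((g ^ m) x) = b x := by
      intro m
      induction m with
      | zero => simp
      | succ m ih => 
        intro x
        rw [pow_succ, Equiv.Perm.mul_apply, ih]
        exact (congrFun hb x).symm
    have hsame : ∀ x y, cl x = cl y → b x = b y := by
      intro x y h
      obtain ⟨m, -, hm⟩ := (clsame x y h).exists_pow_eq'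
      rw [← hm, hz]
    refine ⟨fun c => b (Function.surjInv cls c), by simp, ?_⟩
    funext a
    exact hsame _ _ (Function.surjInv_eq cls _)

section analytic
variable {n : Type*} [Fintype n] [DecidableEq n]

/-- Squared norm. -/
noncomputable def sqN (v : n → ℂ) : ℝ := ∑ x, Complex.normSq (v x)

/-- Integrand of the moments. -/
noncomputable def momI (k : ℕ) (v : n → ℂ) (i j : Fin k → n) : ℂ :=
  ((sqN v : ℂ) ^ ((1 : ℤ) - (k : ℤ))) * ∏ a, (v (i a) * star (v (j a)))

theorem sqN_nonneg (v : n → ℂ) : 0 ≤ sqN v := Finset.sum_nonneg fun _ _ => Complex.normSq_nonneg _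

theorem eq_zero_of_sqN (v : n → ℂ) (h : sqN v = 0) (x : n) : v x = 0 := by
  have := (Finset.sum_eq_zero_iff_of_nonneg (fun x _ => Complex.normSq_nonneg (v x))).mp h x (Finset.mem_univ _)
  simpa using this

theorem sqN_eq_dot (v : n → ℂ) : (sqN v : ℂ) = star v ⬝ᵥ v := by
  simp [sqN, dotProduct, Complex.normSq_eq_conj_mul_self]

theorem sqN_mulVec (V : Matrix n n ℂ) (hV : V ∈ Matrix.unitaryGroup n ℂ) (v : n → ℂ) :
    sqN (V *ᵥ v) = sqN v := by
  have : (sqN (V *ᵥ v) : ℂ) = sqN v := by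
    rw [sqN_eq_dot, sqN_eq_dot, Matrix.star_mulVec, Matrix.dotProduct_mulVec, Matrix.vecMul_vecMul,
      ← Matrix.star_eq_conjTranspose, Matrix.mem_unitaryGroup_iff'.mp hV, Matrix.vecMul_one]
  exact_mod_cast this

theorem normSq_le_sqN (v : n → ℂ) (x : n) : ‖v x‖ ^ 2 ≤ sqN v := by
  rw [← Complex.normSq_eq_norm_sq]
  exact Finset.single_le_sum (f := fun x => Complex.normSq (v x)) (fun x _ => Complex.normSq_nonneg (v x)) (Finset.mem_univ x)

theorem momI_bound (k : ℕ) (v : n → ℂ) (i j : Fin k → n) : ‖momI k v i j‖ ≤ sqN v := by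
  rcases (sqN_nonneg v).eq_or_lt with h | h
  · unfold momI
    rcases Nat.eq_zero_or_pos k with hk | hk
    · subst hk; simp [← h]
    · rw [Finset.prod_eq_zero (Finset.mem_univ ⟨0, hk⟩)]
      · simp [← h]
      · simp [eq_zero_of_sqN v h.symm]
  · have h1 : ‖∏ a, (v (i a) * star (v (j a)))‖ ≤ sqN v ^ k := by
      rw [norm_prod]
      calc _ ≤ ∏ a : Fin k, sqN v := by
            apply Finset.prod_le_prod
            · intros; positivity
            · intro a _
              rw [norm_mul, norm_star]
              nlinarith [normSq_le_sqN v (i a), normSq_le_sqN v (j a), sq_nonneg (‖v (i a)‖ - ‖v (j a)‖)]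
        _ = _ := by simp
    unfold momI
    rw [norm_mul, norm_zpow, Complex.norm_real, Real.norm_of_nonneg h.le]
    calc _ ≤ sqN v ^ ((1:ℤ) - k) * sqN v ^ k := by gcongr
      _ = sqN v := by
        rw [← zpow_natCast, ← zpow_add₀ h.ne']; simp

theorem momI_trace (k : ℕ) (v : n → ℂ) (i j : Fin k → n) :
    ∑ y, momI (k+1) v (Fin.cons y i) (Fin.cons y j) = momI k v i j := by
  have hs : ∑ y, v y * star (v y) = (sqN v : ℂ) := by
    rw [sqN_eq_dot]; simp [dotProduct, mul_comm]
  have e : ∑ y, momI (k+1) v (Fin.cons y i) (Fin.cons y j) =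
      (sqN v : ℂ) ^ ((1 : ℤ) - ((k+1 : ℕ) : ℤ)) * ((sqN v : ℂ) * ∏ a, (v (i a) * star (v (j a)))) := by
    rw [← hs, Finset.sum_mul, Finset.mul_sum, hs]
    refine Finset.sum_congr rfl fun y _ => ?_
    simp [momI, Fin.prod_univ_succ]
  rw [e, momI]
  by_cases h : sqN v = 0
  · rcases Nat.eq_zero_or_pos k with hk | hk
    · subst hk; simp
    · rw [Finset.prod_eq_zero (Finset.mem_univ ⟨0, hk⟩)]
      · simp
      · simp [eq_zero_of_sqN v h]
  · have h' : (sqN v : ℂ) ≠ 0 := by exact_mod_cast h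
    rw [← mul_assoc, ← zpow_add_one₀ h']
    congr 2
    push_cast; ring

theorem momI_mulVec (k : ℕ) (V : Matrix n n ℂ) (hV : V ∈ Matrix.unitaryGroup n ℂ) (v : n → ℂ)
    (i j : Fin k → n) : momI k (V *ᵥ v) i j =
      ∑ i' : Fin k → n, ∑ j' : Fin k → n,
        (∏ a, V (i a) (i' a)) * (∏ a, star (V (j a) (j' a))) * momI k v i' j' := by
  unfold momI
  rw [sqN_mulVec V hV, Finset.prod_mul_distrib]
  simp only [Matrix.mulVec, dotProduct, star_sum, star_mul']
  rw [Finset.prod_univ_sum, Finset.prod_univ_sum, Finset.sum_mul_sum, Finset.mul_sum]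
  simp only [Fintype.piFinset_univ, Finset.mul_sum, Finset.prod_mul_distrib]
  refine Finset.sum_congr rfl fun i' _ => Finset.sum_congr rfl fun j' _ => ?_
  ring

theorem momI_symm1 (k : ℕ) (v : n → ℂ) (i j : Fin k → n) (g : Equiv.Perm (Fin k)) :
    momI k v (i ∘ g) j = momI k v i j := by
  unfold momI
  simp only [Finset.prod_mul_distrib, Function.comp]
  rw [Equiv.prod_comp g (fun a => v (i a))]

theorem momI_symm2 (k : ℕ) (v : n → ℂ) (i j : Fin k → n) (g : Equiv.Perm (Fin k)) :
    momI k v i (j ∘ g) = momI k v i j := by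
  unfold momI
  simp only [Finset.prod_mul_distrib, Function.comp]
  rw [Equiv.prod_comp g (fun a => star (v (j a)))]

variable {Ω : Type*} [MeasurableSpace Ω]

theorem momI_meas (k : ℕ) (φ : Ω → n → ℂ) (hm : ∀ x, Measurable fun ω => φ ω x) (i j : Fin k → n) :
    Measurable fun ω => momI k (φ ω) i j := by
  have h1 : Measurable fun ω => sqN (φ ω) := by
    unfold sqN
    exact Finset.measurable_fun_sum _ fun x _ => Complex.continuous_normSq.measurable.comp (hm x)
  have h2 : Measurable fun ω => (sqN (φ ω) : ℂ) := Complex.measurable_ofReal.comp h1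
  unfold momI
  refine Measurable.mul ?_ ?_
  · exact h2.pow_const ((1 : ℤ) - (k : ℤ))
  · exact Finset.measurable_fun_prod _ fun a _ => (hm _).mul (continuous_star.measurable.comp (hm _))

theorem momI_integrable (μ : Measure Ω) [IsProbabilityMeasure μ]
    (k : ℕ) (φ : Ω → n → ℂ) (hm : ∀ x, Measurable fun ω => φ ω x)
    (hb : ∀ ω, sqN (φ ω) ≤ 1) (i j : Fin k → n) :
    Integrable (fun ω => momI k (φ ω) i j) μ :=
  Integrable.of_bound (momI_meas k φ hm i j).aestronglyMeasurable 1
    (Filter.Eventually.of_forall fun ω => (momI_bound k (φ ω) i j).trans (hb ω))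

theorem haar_moment (μ : Measure Ω) [IsProbabilityMeasure μ] (hn : 1 ≤ Fintype.card n)
    (φ : Ω → n → ℂ) (hm : ∀ x, Measurable fun ω => φ ω x)
    (hb : ∀ ω, sqN (φ ω) ≤ 1)
    (hinv : ∀ V ∈ Matrix.unitaryGroup n ℂ, ∃ τ : Ω → Ω, Measurable τ ∧ μ.map τ = μ ∧
      ∀ ω, φ (τ ω) = V *ᵥ φ ω) (k : ℕ) (i j : Fin k → n) :
    ∫ ω, momI k (φ ω) i j ∂μ = (∫ ω, (sqN (φ ω) : ℂ) ∂μ) *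
      (((Fintype.card n - 1).factorial : ℂ) / ((Fintype.card n + k - 1).factorial : ℂ)) *
      permDelta k i j := by
  have hI := fun k => momI_integrable μ k φ hm hb
  refine moment_formula (fun k i j => ∫ ω, momI k (φ ω) i j ∂μ) hn ?_ ?_ ?_ ?_ _ ?_ k i j
  · intro k V hV i j
    obtain ⟨τ, hτ, hτμ, hφ⟩ := hinv V hV
    have h1 : ∫ ω, momI k (φ ω) i j ∂μ = ∫ ω, momI k (φ (τ ω)) i j ∂μ := by
      conv_lhs => rw [← hτμ]
      rw [integral_map hτ.aemeasurable (momI_meas k φ hm i j).aestronglyMeasurable]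
    show ∫ ω, momI k (φ ω) i j ∂μ = _
    rw [h1]
    simp only [hφ, momI_mulVec k V hV]
    rw [integral_finsetSum _ fun i' _ => integrable_finsetSum _ fun j' _ => (hI k i' j').const_mul _]
    refine Finset.sum_congr rfl fun i' _ => ?_
    rw [integral_finsetSum _ fun j' _ => (hI k i' j').const_mul _]
    refine Finset.sum_congr rfl fun j' _ => ?_
    rw [integral_const_mul]
  · intro k i j g
    simp only [momI_symm1]
  · intro k i j g
    simp only [momI_symm2]
  · intro k i j
    show ∑ y, ∫ ω, momI (k+1) (φ ω) (Fin.cons y i) (Fin.cons y j) ∂μ = _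
    rw [← integral_finsetSum _ fun y _ => hI _ _ _]
    simp only [momI_trace]
  · intro i j
    simp [momI]
end analytic

/-- For a Haar-random pure state `ψ = U e₁` on `ℂ^{D_A} ⊗ ℂ^{D₂} ⊗ ℂ^{D_C}` (with `μ` the
normalized Haar, i.e. left-invariant, probability measure on the unitary group and `e₁` a
fixed unit vector), the expected `k`-th moment of the mixed state projected ensemble
`E_ψ [ Σ_{α : P_α > 0} P_α^{1−k} (Tr_{D₂}(|ψ̃_α⟩⟨ψ̃_α|))^{⊗k} ]` equals the `k`-th moment of
the generalized Hilbert–Schmidt ensemble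
`((D_A D₂ − 1)!/(D_A D₂ + k − 1)!) Σ_{g ∈ S_k} D₂^{l(g)} P_{D_A}(g)`. -/
theorem mspe_haar_moment (DA D2 DC k : ℕ)
    (hDA : 1 ≤ DA) (hD2 : 1 ≤ D2) (hDC : 1 ≤ DC) (hk : 1 ≤ k)
    (μ : Measure ↥(Matrix.unitaryGroup ((Fin DA × Fin D2) × Fin DC) ℂ))
    [IsProbabilityMeasure μ]
    (hμ : ∀ V : ↥(Matrix.unitaryGroup ((Fin DA × Fin D2) × Fin DC) ℂ),
      μ.map (fun U => V * U) = μ)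
    (e₁ : (Fin DA × Fin D2) × Fin DC → ℂ) (he : star e₁ ⬝ᵥ e₁ = 1) :
    ∀ r c : Fin k → Fin DA,
      (∫ U : ↥(Matrix.unitaryGroup ((Fin DA × Fin D2) × Fin DC) ℂ),
          ∑ α ∈ Finset.univ.filter
              (fun α : Fin DC =>
                0 < bornP (projVec (psiVec U e₁) α)),
            ((bornP (projVec (psiVec U e₁) α) : ℂ) ^ ((1 : ℤ) - (k : ℤ))) *
              tensorPow (k := k) (ptraceOuter (projVec (psiVec U e₁) α)) r c ∂μ)
        = (((DA * D2 - 1).factorial : ℂ) / ((DA * D2 + k - 1).factorial : ℂ)) *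
            (∑ g : Equiv.Perm (Fin k), (D2 : ℂ) ^ cycleCount g • permMatrix DA g) r c := by

  intro r c
  have hcont : ∀ y, Continuous fun U : ↥(Matrix.unitaryGroup ((Fin DA × Fin D2) × Fin DC) ℂ) =>
      psiVec U e₁ y := by
    intro y
    unfold psiVec
    exact (continuous_apply y).comp (Continuous.matrix_mulVec continuous_subtype_val continuous_const)
  have hBM : BorelSpace (Matrix ((Fin DA × Fin D2) × Fin DC) ((Fin DA × Fin D2) × Fin DC) ℂ) := ⟨rfl⟩
  have hBU : BorelSpace ↥(Matrix.unitaryGroup ((Fin DA × Fin D2) × Fin DC) ℂ) := Subtype.borelSpace _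
  have hm : ∀ α x, Measurable fun U : ↥(Matrix.unitaryGroup ((Fin DA × Fin D2) × Fin DC) ℂ) =>
      projVec (psiVec U e₁) α x := fun α x => (hcont (x, α)).measurable
  have htot : ∀ U : ↥(Matrix.unitaryGroup ((Fin DA × Fin D2) × Fin DC) ℂ),
      ∑ α, sqN (projVec (psiVec U e₁) α) = 1 := by
    intro U
    have h1 : sqN (psiVec U e₁) = 1 := by
      unfold psiVec
      rw [sqN_mulVec _ U.2]
      have := sqN_eq_dot e₁
      rw [he] at this
      exact_mod_cast this
    rw [← h1]
    unfold sqN projVec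
    rw [Fintype.sum_prod_type (f := fun p => Complex.normSq (psiVec U e₁ p)), Finset.sum_comm]
  have hb : ∀ α, ∀ U : ↥(Matrix.unitaryGroup ((Fin DA × Fin D2) × Fin DC) ℂ),
      sqN (projVec (psiVec U e₁) α) ≤ 1 := by
    intro α U
    rw [← htot U]
    exact Finset.single_le_sum (f := fun α => sqN (projVec (psiVec U e₁) α))
      (fun α _ => sqN_nonneg _) (Finset.mem_univ α)
  have hinv : ∀ α, ∀ V ∈ Matrix.unitaryGroup (Fin DA × Fin D2) ℂ,
      ∃ τ : ↥(Matrix.unitaryGroup ((Fin DA × Fin D2) × Fin DC) ℂ) →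
          ↥(Matrix.unitaryGroup ((Fin DA × Fin D2) × Fin DC) ℂ),
        Measurable τ ∧ μ.map τ = μ ∧
        ∀ U, projVec (psiVec (τ U) e₁) α = V *ᵥ projVec (psiVec U e₁) α := by
    intro α V hV
    have hW : Matrix.blockDiagonal (fun _ : Fin DC => V) ∈
        Matrix.unitaryGroup ((Fin DA × Fin D2) × Fin DC) ℂ := by
      rw [Matrix.mem_unitaryGroup_iff, Matrix.star_eq_conjTranspose,
        Matrix.blockDiagonal_conjTranspose, ← Matrix.blockDiagonal_mul]
      have : V * Vᴴ = 1 := Matrix.mem_unitaryGroup_iff.mp hV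
      simp only [this]
      exact Matrix.blockDiagonal_one
    refine ⟨fun U => ⟨_, hW⟩ * U, ?_, hμ _, ?_⟩
    · exact (continuous_const.mul continuous_id).measurable
    · intro U
      funext x
      simp only [projVec, psiVec, Submonoid.coe_mul]
      rw [← Matrix.mulVec_mulVec]
      generalize (U : Matrix ((Fin DA × Fin D2) × Fin DC) ((Fin DA × Fin D2) × Fin DC) ℂ) *ᵥ e₁ = w
      simp only [Matrix.mulVec, dotProduct, Fintype.sum_prod_type (α₂ := Fin DC), Matrix.blockDiagonal_apply]
      simp [projVec, ite_mul]
  have hcard : Fintype.card (Fin DA × Fin D2) = DA * D2 := by simp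
  have hmom := fun α => haar_moment μ (by rw [hcard]; exact Nat.mul_pos hDA hD2)
    (fun U => projVec (psiVec U e₁) α) (hm α) (hb α) (hinv α) k
  simp only [hcard] at hmom
  have hI := fun α => momI_integrable μ k
    (fun U => projVec (psiVec U e₁) α) (hm α) (hb α)
  have hIs : ∀ α, Integrable (fun U => (sqN (projVec (psiVec U e₁) α) : ℂ)) μ := by
    intro α
    have := momI_integrable μ 0
      (fun U => projVec (psiVec U e₁) α) (hm α) (hb α) Fin.elim0 Fin.elim0
    simpa [momI] using this
  have hexp : ∀ U : ↥(Matrix.unitaryGroup ((Fin DA × Fin D2) × Fin DC) ℂ),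
      (∑ α ∈ Finset.univ.filter
              (fun α : Fin DC =>
                0 < bornP (projVec (psiVec U e₁) α)),
            ((bornP (projVec (psiVec U e₁) α) : ℂ) ^ ((1 : ℤ) - (k : ℤ))) *
              tensorPow (k := k) (ptraceOuter (projVec (psiVec U e₁) α)) r c)
      = ∑ α, ∑ b : Fin k → Fin D2, momI k (projVec (psiVec U e₁) α)
          (fun a => (r a, b a)) (fun a => (c a, b a)) := by
    intro U
    rw [Finset.sum_filter]
    refine Finset.sum_congr rfl fun α _ => ?_
    have e : ((bornP (projVec (psiVec U e₁) α) : ℂ) ^ ((1 : ℤ) - (k : ℤ))) *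
              tensorPow (k := k) (ptraceOuter (projVec (psiVec U e₁) α)) r c =
        ∑ b : Fin k → Fin D2, momI k (projVec (psiVec U e₁) α)
          (fun a => (r a, b a)) (fun a => (c a, b a)) := by
      unfold tensorPow ptraceOuter momI
      rw [Finset.prod_univ_sum, Fintype.piFinset_univ, Finset.mul_sum]
      rfl
    split_ifs with hP
    · exact e
    · symm
      apply Finset.sum_eq_zero
      intro b _
      have h0 : sqN (projVec (psiVec U e₁) α) = 0 := le_antisymm (not_lt.mp hP) (sqN_nonneg _)
      have := momI_bound k (projVec (psiVec U e₁) α) (fun a => (r a, b a)) (fun a => (c a, b a))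
      rw [h0] at this
      exact norm_le_zero_iff.mp this
  simp only [hexp]
  rw [integral_finsetSum _ fun α _ => integrable_finsetSum _ fun b _ => hI α _ _]
  have hα : ∀ α, ∫ U, ∑ b : Fin k → Fin D2, momI k (projVec (psiVec U e₁) α)
          (fun a => (r a, b a)) (fun a => (c a, b a)) ∂μ
      = (∫ U, (sqN (projVec (psiVec U e₁) α) : ℂ) ∂μ) *
      ((((DA * D2 - 1).factorial : ℂ) / ((DA * D2 + k - 1).factorial : ℂ)) *
      ∑ b : Fin k → Fin D2, permDelta k (fun a => (r a, b a)) (fun a => (c a, b a))) := by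
    intro α
    rw [integral_finsetSum _ fun b _ => hI α _ _, Finset.mul_sum, Finset.mul_sum]
    refine Finset.sum_congr rfl fun b _ => ?_
    rw [hmom]
    ring
  simp only [hα]
  rw [← Finset.sum_mul, ← integral_finsetSum _ fun α _ => hIs α]
  have hone : ∀ U : ↥(Matrix.unitaryGroup ((Fin DA × Fin D2) × Fin DC) ℂ),
      ∑ α, (sqN (projVec (psiVec U e₁) α) : ℂ) = 1 := by
    intro U
    exact_mod_cast htot U
  simp only [hone]
  rw [integral_const, probReal_univ, one_smul, one_mul]
  congr 1
  unfold permDelta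
  rw [Finset.sum_comm, Matrix.sum_apply]
  refine Finset.sum_congr rfl fun g _ => ?_
  rw [Matrix.smul_apply]
  unfold permMatrix cycleCount
  have hpair : ∀ b : Fin k → Fin D2,
      ((fun a => (r a, b a)) = fun a => (c (g a), b (g a))) ↔
        ((r = fun a => c (g a)) ∧ b = fun a => b (g a)) := by
    intro b
    simp only [funext_iff, Prod.mk.injEq, forall_and]
  simp only [hpair]
  have hc := card_invariant (D := D2) g
  by_cases hr : r = fun a => c (g a)
  · simp only [hr, true_and, if_true]
    rw [Finset.sum_boole, hc]
    simp
  · simp [hr]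
end

section
/- (Lévy's lemma) Let D ≥ 1, let S^{2D−1} denote the unit sphere in ℝ^{2D} equipped with the uniform (rotation-invariant) probability measure σ, and let f : S^{2D−1} → ℝ be a function that is Lipschitz with constant η > 0 with respect to the Euclidean distance. Then for every ε > 0, σ({ v ∈ S^{2D−1} : |f(v) − ∫ f dσ| ≥ ε }) ≤ 2 exp(−2Dε²/(9π³η²)). -/
open MeasureTheory Metric

theorem bm_compact {K L C : Set ℝ} (hK : IsCompact K) (hL : IsCompact L) (hK0 : K.Nonempty)
    (hL0 : L.Nonempty) (h : ∀ a ∈ K, ∀ b ∈ L, (a + b) / 2 ∈ C) :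
    volume K + volume L ≤ 2 * volume C := by
  set k := sSup K
  set l := sInf L
  have hk : k ∈ K := hK.sSup_mem hK0
  have hl : l ∈ L := hL.sInf_mem hL0
  set K' : Set ℝ := (fun x => -l + x) ⁻¹' K
  set L' : Set ℝ := (fun x => -k + x) ⁻¹' L
  have e1 : volume K' = volume K := measure_preimage_add _ _ _
  have e2 : volume L' = volume L := measure_preimage_add _ _ _
  have mL' : MeasurableSet L' := hL.measurableSet.preimage (by fun_prop)
  have e3 : volume ((fun x => (2⁻¹:ℝ) * x) ⁻¹' C) = 2 * volume C := by
    rw [Real.volume_preimage_mul_left (by norm_num)]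
    norm_num
  have hd : AEDisjoint volume K' L' := by
    refine measure_mono_null (t := {k + l}) ?_ (by simp)
    rintro x ⟨h1, h2⟩
    have a1 : -l + x ≤ k := le_csSup hK.bddAbove h1
    have a2 : l ≤ -k + x := csInf_le hL.bddBelow h2
    simp only [Set.mem_singleton_iff]
    linarith
  rw [← e1, ← e2, ← e3, ← measure_union₀ mL'.nullMeasurableSet hd]
  apply measure_mono
  rintro x (h1 | h1)
  · have := h _ h1 l hl
    simp only [Set.mem_preimage]
    convert this using 1
    ring
  · have := h k hk _ h1
    simp only [Set.mem_preimage]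
    convert this using 1
    ring

theorem bm_meas {A B C : Set ℝ} (hA : MeasurableSet A) (hB : MeasurableSet B) (hA0 : A.Nonempty)
    (hB0 : B.Nonempty) (h : ∀ a ∈ A, ∀ b ∈ B, (a + b) / 2 ∈ C) :
    volume A + volume B ≤ 2 * volume C := by
  obtain ⟨a, ha⟩ := hA0
  obtain ⟨b, hb⟩ := hB0
  have key : ∀ K ⊆ A, IsCompact K → ∀ L ⊆ B, IsCompact L → volume K + volume L ≤ 2 * volume C := by
    intro K hKA hK L hLB hL
    refine le_trans ?_ (bm_compact (hK.insert a) (hL.insert b) (Set.insert_nonempty _ _)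
      (Set.insert_nonempty _ _) (C := C) ?_)
    · exact add_le_add (measure_mono (Set.subset_insert _ _)) (measure_mono (Set.subset_insert _ _))
    · intro x hx y hy
      exact h x (Set.insert_subset ha hKA hx) y (Set.insert_subset hb hLB hy)
  have key2 : ∀ L ⊆ B, IsCompact L → volume A + volume L ≤ 2 * volume C := by
    intro L hLB hL
    have h1 : volume L ≤ 2 * volume C := by
      simpa using key ∅ (by simp) isCompact_empty L hLB hL
    rw [← tsub_add_cancel_of_le h1]
    gcongr
    rw [hA.measure_eq_iSup_isCompact]
    refine iSup₂_le fun K hKA => iSup_le fun hK => ?_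
    exact ENNReal.le_sub_of_add_le_right hL.measure_lt_top.ne (key K hKA hK L hLB hL)
  have h1 : volume A ≤ 2 * volume C := by
    simpa using key2 ∅ (by simp) isCompact_empty
  by_cases hT : volume A = ⊤
  · rw [hT, top_le_iff] at h1
    simp [h1]
  rw [← add_tsub_cancel_of_le h1]
  gcongr
  rw [hB.measure_eq_iSup_isCompact]
  refine iSup₂_le fun K hKA => iSup_le fun hK => ?_
  exact ENNReal.le_sub_of_add_le_left hT (key2 K hKA hK)

theorem ennreal_amgm {x y z : ENNReal} (h : x + y ≤ 2 * z) : x * y ≤ z ^ 2 := by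
  by_cases hz : z = ⊤
  · simp [hz]
  have hx : x ≠ ⊤ := by
    rintro rfl
    simp at h
    exact absurd h (ENNReal.mul_ne_top (by simp) hz)
  have hy : y ≠ ⊤ := by
    rintro rfl
    simp at h
    exact absurd h (ENNReal.mul_ne_top (by simp) hz)
  lift x to NNReal using hx
  lift y to NNReal using hy
  lift z to NNReal using hz
  norm_cast at h ⊢
  rw [← NNReal.coe_le_coe] at h ⊢
  push_cast at h ⊢
  nlinarith [sq_nonneg ((x:ℝ) - y), x.2, y.2, z.2, mul_self_le_mul_self (add_nonneg x.2 y.2) h]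

theorem pl_normalized {U V H : ℝ → ℝ} (mU : Measurable U) (mV : Measurable V) (mH : Measurable H)
    (U0 : ∀ x, 0 ≤ U x) (V0 : ∀ x, 0 ≤ V x) (H0 : ∀ x, 0 ≤ H x)
    (U1 : ∀ x, U x ≤ 1) (V1 : ∀ x, V x ≤ 1)
    (U2 : ∀ t < 1, ∃ x, t < U x) (V2 : ∀ t < 1, ∃ x, t < V x)
    (h : ∀ x y, U x * V y ≤ H ((x + y) / 2) ^ 2) :
    (∫⁻ x, ENNReal.ofReal (U x)) * (∫⁻ x, ENNReal.ofReal (V x))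
      ≤ (∫⁻ x, ENNReal.ofReal (H x)) ^ 2 := by
  apply ennreal_amgm
  have aux : ∀ W : ℝ → ℝ, Measurable W → (∀ x, 0 ≤ W x) → (∀ x, W x ≤ 1) →
      ∫⁻ x, ENNReal.ofReal (W x) = ∫⁻ t in Set.Ioo (0:ℝ) 1, volume {x | t < W x} := by
    intro W mW W0 W1
    rw [lintegral_eq_lintegral_meas_lt volume (Filter.Eventually.of_forall W0) mW.aemeasurable]
    rw [← lintegral_indicator measurableSet_Ioi, ← lintegral_indicator measurableSet_Ioo]
    congr 1
    ext t
    by_cases h1 : t < 1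
    · simp [Set.indicator, h1]
    · have : {x | t < W x} = ∅ := by
        ext x
        simp only [Set.mem_ofPred_eq, Set.mem_empty_iff_false, iff_false, not_lt]
        exact (W1 x).trans (not_lt.1 h1)
      simp [Set.indicator, this]
  have mm : ∀ W : ℝ → ℝ, Measurable fun t : ℝ => volume {x | t < W x} := by
    intro W
    apply Antitone.measurable
    intro s t hst
    exact measure_mono fun x hx => lt_of_le_of_lt hst hx
  rw [aux U mU U0 U1, aux V mV V0 V1,
    lintegral_eq_lintegral_meas_lt volume (Filter.Eventually.of_forall H0) mH.aemeasurable,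
    ← lintegral_add_left (mm U), ← lintegral_const_mul _ (mm H)]
  refine le_trans (setLIntegral_mono (g := fun t => 2 * volume {x | t < H x}) ((mm H).const_mul 2) ?_)
    (lintegral_mono_set (Set.Ioo_subset_Ioi_self))
  intro t ht
  apply bm_meas (measurableSet_lt measurable_const mU) (measurableSet_lt measurable_const mV)
    (U2 t ht.2) (V2 t ht.2)
  intro a ha b hb
  simp only [Set.mem_ofPred_eq] at *
  have h1 := h a b
  have h2 : t * t < U a * V b := mul_lt_mul'' ha hb ht.1.le ht.1.le
  have h3 := H0 ((a+b)/2)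
  by_contra h4
  push Not at h4
  nlinarith

theorem pl_bounded {U V H : ℝ → ℝ} (mU : Measurable U) (mV : Measurable V) (mH : Measurable H)
    (U0 : ∀ x, 0 ≤ U x) (V0 : ∀ x, 0 ≤ V x) (H0 : ∀ x, 0 ≤ H x)
    {a b : ℝ} (U1 : ∀ x, U x ≤ a) (V1 : ∀ x, V x ≤ b)
    (h : ∀ x y, U x * V y ≤ H ((x + y) / 2) ^ 2) :
    (∫⁻ x, ENNReal.ofReal (U x)) * (∫⁻ x, ENNReal.ofReal (V x))
      ≤ (∫⁻ x, ENNReal.ofReal (H x)) ^ 2 := by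
  have bU : BddAbove (Set.range U) := ⟨a, by rintro _ ⟨x, rfl⟩; exact U1 x⟩
  have bV : BddAbove (Set.range V) := ⟨b, by rintro _ ⟨x, rfl⟩; exact V1 x⟩
  set A := ⨆ x, U x
  set B := ⨆ x, V x
  have U3 : ∀ x, U x ≤ A := fun x => le_ciSup bU x
  have V3 : ∀ x, V x ≤ B := fun x => le_ciSup bV x
  have A0 : 0 ≤ A := (U0 0).trans (U3 0)
  have B0 : 0 ≤ B := (V0 0).trans (V3 0)
  rcases A0.eq_or_lt with hA | hA
  · have : ∀ x, U x = 0 := fun x => le_antisymm (hA ▸ U3 x) (U0 x)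
    simp [this]
  rcases B0.eq_or_lt with hB | hB
  · have : ∀ x, V x = 0 := fun x => le_antisymm (hB ▸ V3 x) (V0 x)
    simp [this]
  have hs : 0 < √(A * B) := Real.sqrt_pos.2 (mul_pos hA hB)
  have hs2 : √(A * B) ^ 2 = A * B := Real.sq_sqrt (mul_pos hA hB).le
  have key := pl_normalized (U := fun x => U x / A) (V := fun x => V x / B)
    (H := fun x => H x / √(A * B)) (by fun_prop) (by fun_prop) (by fun_prop)
    (fun x => div_nonneg (U0 x) A0) (fun x => div_nonneg (V0 x) B0)
    (fun x => div_nonneg (H0 x) hs.le) (fun x => (div_le_one hA).2 (U3 x))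
    (fun x => (div_le_one hB).2 (V3 x))
    (fun t ht => by
      obtain ⟨x, hx⟩ := exists_lt_of_lt_ciSup (show t * A < ⨆ x, U x by
        change t * A < A
        nlinarith)
      exact ⟨x, (lt_div_iff₀ hA).2 hx⟩)
    (fun t ht => by
      obtain ⟨x, hx⟩ := exists_lt_of_lt_ciSup (show t * B < ⨆ x, V x by
        change t * B < B
        nlinarith)
      exact ⟨x, (lt_div_iff₀ hB).2 hx⟩)
    (fun x y => by
      rw [div_mul_div_comm, div_pow, hs2]
      exact div_le_div_of_nonneg_right (h x y) (mul_pos hA hB).le)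
  have sc : ∀ (W : ℝ → ℝ) (c : ℝ), Measurable W → 0 < c →
      ∫⁻ x, ENNReal.ofReal (W x) = ENNReal.ofReal c * ∫⁻ x, ENNReal.ofReal (W x / c) := by
    intro W c mW hc
    rw [← lintegral_const_mul _ (by fun_prop)]
    congr 1
    ext x
    rw [← ENNReal.ofReal_mul hc.le]
    congr 1
    field_simp
  rw [sc U A mU hA, sc V B mV hB, sc H _ mH hs, mul_mul_mul_comm, mul_pow,
    ← ENNReal.ofReal_mul hA.le, ← ENNReal.ofReal_pow hs.le, hs2]
  gcongr

/-- The Maurey property (τ) with cost `c`. -/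
def PropTau {α : Type*} [MeasurableSpace α] (μ : Measure α) (c : α → α → ℝ) : Prop :=
  ∀ u v : α → ENNReal, Measurable u → Measurable v →
    (∀ x y, u x * v y ≤ ENNReal.ofReal (Real.exp (c x y))) →
    (∫⁻ x, u x ∂μ) * (∫⁻ x, v x ∂μ) ≤ 1

theorem PropTau.map {α β : Type*} [MeasurableSpace α] [MeasurableSpace β] {μ : Measure α}
    {c : α → α → ℝ} (h : PropTau μ c) (T : α → β) (mT : Measurable T) (d : β → β → ℝ)
    (hd : ∀ x y, d (T x) (T y) = c x y) : PropTau (μ.map T) d := by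
  intro u v mu mv huv
  rw [lintegral_map mu mT, lintegral_map mv mT]
  refine h _ _ (mu.comp mT) (mv.comp mT) fun x y => ?_
  rw [← hd]
  exact huv _ _

theorem PropTau.prod {α β : Type*} [MeasurableSpace α] [MeasurableSpace β] {μ : Measure α}
    {ν : Measure β} [SFinite ν]
    {c : α → α → ℝ} {d : β → β → ℝ} (h : PropTau μ c) (h' : PropTau ν d) :
    PropTau (μ.prod ν) (fun p q => c p.1 q.1 + d p.2 q.2) := by
  intro u v mu mv huv
  rw [lintegral_prod _ mu.aemeasurable, lintegral_prod _ mv.aemeasurable]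
  refine h _ _ mu.lintegral_prod_right' mv.lintegral_prod_right' fun x y => ?_
  have hpos : 0 < Real.exp (c x y) := Real.exp_pos _
  have key := h' (fun s => ENNReal.ofReal (Real.exp (-c x y)) * u (x, s)) (fun t => v (y, t))
    (by fun_prop) (by fun_prop) (fun s t => by
      rw [mul_assoc]
      refine (mul_le_mul_right (huv (x, s) (y, t)) _).trans ?_
      rw [← ENNReal.ofReal_mul (Real.exp_pos _).le, ← Real.exp_add]
      simp)
  rw [lintegral_const_mul _ (by fun_prop), mul_assoc] at key
  have := mul_le_mul_right key (ENNReal.ofReal (Real.exp (c x y)))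
  rwa [← mul_assoc, ← ENNReal.ofReal_mul (Real.exp_pos _).le, ← Real.exp_add, mul_one,
    add_neg_cancel, Real.exp_zero, ENNReal.ofReal_one, one_mul] at this

open ProbabilityTheory

theorem propTau_gaussianReal_bdd (u v : ℝ → ENNReal) (mu : Measurable u) (mv : Measurable v)
    (a b : NNReal) (ua : ∀ x, u x ≤ a) (vb : ∀ x, v x ≤ b)
    (huv : ∀ x y, u x * v y ≤ ENNReal.ofReal (Real.exp ((x - y) ^ 2 / 4))) :
    (∫⁻ x, u x ∂(gaussianReal 0 1)) * (∫⁻ x, v x ∂(gaussianReal 0 1)) ≤ 1 := by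
  have one : (1 : NNReal) ≠ 0 := one_ne_zero
  set p := gaussianPDFReal 0 1 with hp
  have pv : ∀ x, p x = (√(2 * Real.pi))⁻¹ * Real.exp (-x ^ 2 / 2) := by
    intro x
    simp [hp, gaussianPDFReal]
  have p0 : ∀ x, 0 ≤ p x := fun x => gaussianPDFReal_nonneg _ _ _
  have mp : Measurable p := measurable_gaussianPDFReal _ _
  have pb : ∀ x, p x ≤ (√(2 * Real.pi))⁻¹ := by
    intro x
    rw [pv]
    refine mul_le_of_le_one_right (by positivity) (Real.exp_le_one_iff.2 ?_)
    nlinarith [sq_nonneg x]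
  have conv : ∀ (w : ℝ → ENNReal) (c : NNReal), Measurable w → (∀ x, w x ≤ c) →
      ∫⁻ x, w x ∂(gaussianReal 0 1) = ∫⁻ x, ENNReal.ofReal ((w x).toReal * p x) := by
    intro w c mw hw
    rw [gaussianReal_of_var_ne_zero _ one, lintegral_withDensity_eq_lintegral_mul _
      (measurable_gaussianPDF _ _) mw]
    congr 1
    ext x
    rw [ENNReal.ofReal_mul ENNReal.toReal_nonneg, ENNReal.ofReal_toReal
      (ne_top_of_le_ne_top ENNReal.coe_ne_top (hw x)), mul_comm]
    rfl
  rw [conv u a mu ua, conv v b mv vb]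
  have tb : ∀ (w : ℝ → ENNReal) (c : NNReal), (∀ x, w x ≤ c) → ∀ x, 
      (w x).toReal * p x ≤ c * (√(2 * Real.pi))⁻¹ := by
    intro w c hw x
    refine mul_le_mul ?_ (pb x) (p0 x) c.2
    exact ENNReal.toReal_le_coe_of_le_coe (hw x)
  have key := pl_bounded (U := fun x => (u x).toReal * p x) (V := fun x => (v x).toReal * p x)
    (H := p) (by fun_prop) (by fun_prop) mp
    (fun x => mul_nonneg ENNReal.toReal_nonneg (p0 x))
    (fun x => mul_nonneg ENNReal.toReal_nonneg (p0 x)) p0 (tb u a ua) (tb v b vb) ?_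
  · refine key.trans ?_
    rw [lintegral_gaussianPDFReal_eq_one _ one, one_pow]
  · intro x y
    have h1 : (u x).toReal * (v y).toReal ≤ Real.exp ((x - y) ^ 2 / 4) := by
      rw [← ENNReal.toReal_mul]
      exact ENNReal.toReal_le_of_le_ofReal (Real.exp_pos _).le (huv x y)
    have h2 : p ((x + y) / 2) ^ 2 = Real.exp ((x - y) ^ 2 / 4) * (p x * p y) := by
      rw [pv, pv, pv]
      have : Real.exp (-((x + y) / 2) ^ 2 / 2) ^ 2 =
          Real.exp ((x - y) ^ 2 / 4) * (Real.exp (-x ^ 2 / 2) * Real.exp (-y ^ 2 / 2)) := by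
        rw [← Real.exp_nat_mul, ← Real.exp_add, ← Real.exp_add]
        congr 1
        push_cast
        ring
      rw [mul_pow, this]
      ring
    rw [h2, mul_mul_mul_comm]
    exact mul_le_mul_of_nonneg_right h1 (mul_nonneg (p0 x) (p0 y))

theorem propTau_gaussianReal : PropTau (gaussianReal 0 1) (fun x y => (x - y) ^ 2 / 4) := by
  intro u v mu mv huv
  have tr : ∀ w : ℝ → ENNReal, Measurable w → ∫⁻ x, w x ∂(gaussianReal 0 1) =
      ⨆ k : ℕ, ∫⁻ x, min (w x) k ∂(gaussianReal 0 1) := by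
    intro w mw
    rw [← lintegral_iSup (fun k => by fun_prop)]
    · congr 1
      ext x
      rw [← inf_iSup_eq, ENNReal.iSup_natCast]
      simp
    · intro i j hij x
      exact min_le_min_left _ (by exact_mod_cast hij)
  rw [tr u mu, tr v mv, ENNReal.iSup_mul]
  refine iSup_le fun k => ?_
  rw [ENNReal.mul_iSup]
  refine iSup_le fun j => ?_
  refine propTau_gaussianReal_bdd _ _ (by fun_prop) (by fun_prop) k j (fun x => by simp)
    (fun x => by simp) fun x y => ?_
  exact (mul_le_mul' (min_le_left _ _) (min_le_left _ _)).trans (huv x y)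

theorem propTau_pi (n : ℕ) : PropTau (Measure.pi (fun _ : Fin n => gaussianReal 0 1))
    (fun x y => (∑ i, (x i - y i) ^ 2) / 4) := by
  induction n with
  | zero =>
    intro u v mu mv huv
    have : ∀ w : (Fin 0 → ℝ) → ENNReal, ∫⁻ x, w x ∂(Measure.pi (fun _ : Fin 0 => gaussianReal 0 1))
        = w 0 := by
      intro w
      have : w = fun _ => w 0 := by
        ext x
        rw [Subsingleton.elim x 0]
      rw [this]
      simp
    rw [this, this]
    simpa using huv 0 0
  | succ n ih =>
    have mp := (measurePreserving_piFinSuccAbove (fun _ : Fin (n + 1) => gaussianReal 0 1) 0).symm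
    rw [← mp.map_eq]
    refine (propTau_gaussianReal.prod ih).map _ mp.measurable _ ?_
    intro x y
    simp [Fin.sum_univ_succ, MeasurableEquiv.piFinSuccAbove]
    ring

theorem propTau_stdGaussian (n : ℕ) : PropTau (stdGaussian (EuclideanSpace ℝ (Fin n)))
    (fun x y => ‖x - y‖ ^ 2 / 4) := by
  rw [← map_pi_eq_stdGaussian]
  refine (propTau_pi n).map _ (by fun_prop) _ ?_
  intro x y
  simp [EuclideanSpace.real_norm_sq_eq]

theorem ofReal_integral_le_lintegral_ofReal_aux {α : Type*} [MeasurableSpace α] {μ : Measure α}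
    {f : α → ℝ} (hf : Integrable f μ) :
    ENNReal.ofReal (∫ x, f x ∂μ) ≤ ∫⁻ x, ENNReal.ofReal (f x) ∂μ := by
  rw [integral_eq_lintegral_pos_part_sub_lintegral_neg_part hf]
  refine (ENNReal.ofReal_le_ofReal (sub_le_self _ ENNReal.toReal_nonneg)).trans ?_
  exact ENNReal.ofReal_toReal_le

theorem charFun_eq_of_norm_eq {n : ℕ} (τ : Measure (EuclideanSpace ℝ (Fin n)))
    (hτ : ∀ O : EuclideanSpace ℝ (Fin n) ≃ₗᵢ[ℝ] EuclideanSpace ℝ (Fin n), τ.map O = τ)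
    {s t : EuclideanSpace ℝ (Fin n)} (h : ‖s‖ = ‖t‖) : charFun τ s = charFun τ t := by
  set O := Submodule.reflection (Submodule.span ℝ {s - t})ᗮ
  have hO : O s = t := Submodule.reflection_sub h
  conv_rhs => rw [← hτ O]
  rw [charFun_apply, charFun_apply, integral_map (by fun_prop) (by fun_prop), ← hO]
  simp

theorem gauss_polar {n : ℕ} (τ : Measure (EuclideanSpace ℝ (Fin n))) [IsProbabilityMeasure τ]
    (hτ : ∀ O : EuclideanSpace ℝ (Fin n) ≃ₗᵢ[ℝ] EuclideanSpace ℝ (Fin n), τ.map O = τ)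
    (hτ1 : ∀ᵐ v ∂τ, ‖v‖ = 1) :
    ((stdGaussian (EuclideanSpace ℝ (Fin n))).prod τ).map (fun p => ‖p.1‖ • p.2)
      = stdGaussian (EuclideanSpace ℝ (Fin n)) := by
  set γ := stdGaussian (EuclideanSpace ℝ (Fin n))
  have mm : Measurable (fun p : EuclideanSpace ℝ (Fin n) × EuclideanSpace ℝ (Fin n) =>
    ‖p.1‖ • p.2) := by fun_prop
  have : IsProbabilityMeasure ((γ.prod τ).map (fun p => ‖p.1‖ • p.2)) :=
    Measure.isProbabilityMeasure_map mm.aemeasurable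
  apply Measure.ext_of_charFun
  ext t
  have ii : ∀ g : EuclideanSpace ℝ (Fin n) × EuclideanSpace ℝ (Fin n) → ℝ, Measurable g →
      Integrable (fun p => Complex.exp (g p * Complex.I)) (γ.prod τ) := by
    intro g mg
    refine Integrable.of_bound (C := 1) (by fun_prop) (Filter.Eventually.of_forall fun p => ?_)
    rw [Complex.norm_exp_ofReal_mul_I]
  rw [charFun_apply, integral_map mm.aemeasurable (by fun_prop),
    integral_prod _ (ii (fun p => inner ℝ (‖p.1‖ • p.2) t) (by fun_prop))]
  have h1 : ∀ x : EuclideanSpace ℝ (Fin n),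
      ∫ v, Complex.exp ((inner ℝ (‖x‖ • v) t : ℝ) * Complex.I) ∂τ =
      ∫ v, Complex.exp ((inner ℝ (‖t‖ • v) x : ℝ) * Complex.I) ∂τ := by
    intro x
    have a1 : ∀ (r : ℝ) (y : EuclideanSpace ℝ (Fin n)),
        ∫ v, Complex.exp ((inner ℝ (r • v) y : ℝ) * Complex.I) ∂τ = charFun τ (r • y) := by
      intro r y
      rw [charFun_apply]
      simp [real_inner_smul_left, real_inner_smul_right]
    rw [a1, a1]
    apply charFun_eq_of_norm_eq τ hτ
    simp [norm_smul, mul_comm]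
  simp_rw [h1]
  rw [integral_integral_swap (f := fun x v => Complex.exp ((inner ℝ (‖t‖ • v) x : ℝ) * Complex.I))
    (ii (fun p => inner ℝ (‖t‖ • p.2) p.1) (by fun_prop))]
  have h2 : ∀ᵐ v ∂τ, ∫ x, Complex.exp ((inner ℝ (‖t‖ • v) x : ℝ) * Complex.I) ∂γ = charFun γ t := by
    filter_upwards [hτ1] with v hv
    have : ∫ x, Complex.exp ((inner ℝ (‖t‖ • v) x : ℝ) * Complex.I) ∂γ = charFun γ (‖t‖ • v) := by
      rw [charFun_apply]
      simp_rw [real_inner_comm]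
    rw [this, charFun_stdGaussian, charFun_stdGaussian]
    simp [norm_smul, hv]
  rw [integral_congr_ae h2]
  simp

theorem integral_abs_gaussianReal : ∫ x, |x| ∂(gaussianReal 0 1) = √(2 / Real.pi) := by
  rw [integral_gaussianReal_eq_integral_smul one_ne_zero]
  have h1 : ∀ x : ℝ, gaussianPDFReal 0 1 x • |x| =
      (√(2 * Real.pi))⁻¹ * (fun y : ℝ => y * Real.exp (-y ^ 2 / 2)) |x| := by
    intro x
    simp [gaussianPDFReal]
    ring
  simp_rw [h1]
  rw [integral_const_mul, integral_comp_abs (f := fun y : ℝ => y * Real.exp (-y ^ 2 / 2))]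
  have h2 := integral_rpow_mul_exp_neg_mul_rpow (p := 2) (q := 1) (b := 1/2) (by norm_num)
    (by norm_num) (by norm_num)
  have h3 : ∫ x in Set.Ioi (0:ℝ), x * Real.exp (-x ^ 2 / 2) = 1 := by
    have : ∫ x in Set.Ioi (0:ℝ), x * Real.exp (-x ^ 2 / 2) =
        ∫ x in Set.Ioi (0:ℝ), x ^ (1:ℝ) * Real.exp (-(1/2) * x ^ (2:ℝ)) := by
      congr 1
      ext x
      rw [Real.rpow_one, Real.rpow_two]
      congr 2
      ring
    rw [this, h2]
    norm_num [Real.rpow_neg_one]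
  rw [h3, mul_one, Real.sqrt_mul (by norm_num), Real.sqrt_div (by norm_num)]
  have : 0 < √Real.pi := Real.sqrt_pos.2 Real.pi_pos
  field_simp
  norm_num

theorem integrable_norm_stdGaussian (n : ℕ) :
    Integrable (fun x => ‖x‖) (stdGaussian (EuclideanSpace ℝ (Fin n))) :=
  (IsGaussian.integrable_id (μ := stdGaussian (EuclideanSpace ℝ (Fin n)))).norm

theorem norm_stdGaussian_ge (n : ℕ) : √n * √(2 / Real.pi) ≤
    ∫ x, ‖x‖ ∂(stdGaussian (EuclideanSpace ℝ (Fin n))) := by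
  rcases Nat.eq_zero_or_pos n with rfl | hn
  · simp
    exact integral_nonneg fun x => norm_nonneg _
  have hn' : (0:ℝ) < n := by exact_mod_cast hn
  have hs : 0 < √(n:ℝ) := Real.sqrt_pos.2 hn'
  have hco : ∀ i : Fin n, Integrable (fun x : EuclideanSpace ℝ (Fin n) => |x i|)
      (stdGaussian (EuclideanSpace ℝ (Fin n))) := by
    intro i
    refine (integrable_norm_stdGaussian n).mono' (by fun_prop) (Filter.Eventually.of_forall ?_)
    intro x
    rw [Real.norm_eq_abs, abs_abs, ← Real.norm_eq_abs]
    exact PiLp.norm_apply_le x i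
  have h1 : ∀ i : Fin n, ∫ x, |x i| ∂(stdGaussian (EuclideanSpace ℝ (Fin n))) = √(2 / Real.pi) := by
    intro i
    have e : ∫ t, |t| ∂(gaussianReal 0 1) =
        ∫ x, |x i| ∂(Measure.pi fun _ : Fin n => gaussianReal 0 1) := by
      conv_lhs => rw [← (measurePreserving_eval (fun _ : Fin n => gaussianReal 0 1) i).map_eq]
      rw [integral_map (measurable_pi_apply i).aemeasurable (by fun_prop)]
    rw [← map_pi_eq_stdGaussian, integral_map (by fun_prop) (by fun_prop),
      ← integral_abs_gaussianReal, e]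
  have h2 : ∀ x : EuclideanSpace ℝ (Fin n), (√n)⁻¹ * ∑ i, |x i| ≤ ‖x‖ := by
    intro x
    rw [inv_mul_le_iff₀ hs, EuclideanSpace.norm_eq, ← Real.sqrt_mul hn'.le]
    apply Real.le_sqrt_of_sq_le
    simpa using sq_sum_le_card_mul_sum_sq (s := Finset.univ) (f := fun i => |x i|)
  calc √n * √(2 / Real.pi) = (√n)⁻¹ * ∑ i : Fin n, √(2 / Real.pi) := by
        have : (√(n:ℝ)) ^ 2 = n := Real.sq_sqrt hn'.le
        simp
        field_simp
        rw [this]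
    _ = ∫ x, (√n)⁻¹ * ∑ i, |x i| ∂(stdGaussian (EuclideanSpace ℝ (Fin n))) := by
        rw [integral_const_mul, integral_finsetSum _ fun i _ => hco i]
        simp_rw [h1]
    _ ≤ _ := integral_mono ((integrable_finsetSum _ fun i _ => hco i).const_mul _)
        (integrable_norm_stdGaussian n) h2

/-- The 1-homogeneous extension of a function on the sphere. -/
noncomputable def homExt {n : ℕ} (g : sphere (0 : EuclideanSpace ℝ (Fin n)) 1 → ℝ)
    (y : EuclideanSpace ℝ (Fin n)) : ℝ :=
  if hy : y = 0 then 0 else ‖y‖ * g ⟨‖y‖⁻¹ • y, by simp [norm_smul, hy]⟩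

theorem homExt_smul {n : ℕ} (g : sphere (0 : EuclideanSpace ℝ (Fin n)) 1 → ℝ) {r : ℝ} (hr : 0 ≤ r)
    (v : sphere (0 : EuclideanSpace ℝ (Fin n)) 1) : homExt g (r • (v : EuclideanSpace ℝ (Fin n))) = r * g v := by
  have hv : ‖(v : EuclideanSpace ℝ (Fin n))‖ = 1 := by simp
  have hv0 : (v : EuclideanSpace ℝ (Fin n)) ≠ 0 := by
    intro h
    simp [h] at hv
  rcases hr.eq_or_lt with rfl | hr
  · simp [homExt]
  · have : r • (v : EuclideanSpace ℝ (Fin n)) ≠ 0 := smul_ne_zero hr.ne' hv0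
    rw [homExt, dif_neg this]
    have h1 : ‖r • (v : EuclideanSpace ℝ (Fin n))‖ = r := by
      rw [norm_smul, hv, Real.norm_of_nonneg hr.le, mul_one]
    have h2 : (⟨‖r • (v : EuclideanSpace ℝ (Fin n))‖⁻¹ • r • (v : EuclideanSpace ℝ (Fin n)), by
        simp [norm_smul, hr.ne']⟩ : sphere (0 : EuclideanSpace ℝ (Fin n)) 1) = v := by
      apply Subtype.ext
      simp only [h1]
      rw [smul_smul, inv_mul_cancel₀ hr.ne', one_smul]
    rw [h2, h1]

theorem exists_polar {n : ℕ} {y : EuclideanSpace ℝ (Fin n)} (hy : y ≠ 0) :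
    ∃ v : sphere (0 : EuclideanSpace ℝ (Fin n)) 1, y = ‖y‖ • (v : EuclideanSpace ℝ (Fin n)) := by
  refine ⟨⟨‖y‖⁻¹ • y, by simp [norm_smul, hy]⟩, ?_⟩
  rw [smul_smul, mul_inv_cancel₀ (norm_ne_zero_iff.2 hy), one_smul]

theorem homExt_lip {n : ℕ} (g : sphere (0 : EuclideanSpace ℝ (Fin n)) 1 → ℝ) {η : ℝ} (hη : 0 < η)
    (hg : ∀ v w, |g v - g w| ≤ η * dist v w) (hb : ∀ v, |g v| ≤ 2 * η)
    (x y : EuclideanSpace ℝ (Fin n)) : |homExt g x - homExt g y| ≤ 4 * η * ‖x - y‖ := by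
  have hz : homExt g 0 = 0 := by simp [homExt]
  have h0 : ∀ x, |homExt g x| ≤ 4 * η * ‖x‖ := by
    intro x
    by_cases hx : x = 0
    · simp [hx, hz]
    obtain ⟨v, hv⟩ := exists_polar hx
    conv_lhs => rw [hv, homExt_smul g (norm_nonneg x), abs_mul, abs_norm]
    nlinarith [hb v, norm_nonneg x, mul_le_mul_of_nonneg_left (hb v) (norm_nonneg x),
      mul_nonneg hη.le (norm_nonneg x)]
  by_cases hx : x = 0
  · simpa [hx, hz] using h0 y
  by_cases hy : y = 0
  · simpa [hy, hz] using h0 x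
  obtain ⟨v, hv⟩ := exists_polar hx
  obtain ⟨w, hw⟩ := exists_polar hy
  have e1 : homExt g x = ‖x‖ * g v := by
    conv_lhs => rw [hv, homExt_smul g (norm_nonneg x)]
  have e2 : homExt g y = ‖y‖ * g w := by
    conv_lhs => rw [hw, homExt_smul g (norm_nonneg y)]
  have hw1 : ‖(w : EuclideanSpace ℝ (Fin n))‖ = 1 := by simp
  have hd : |‖x‖ - ‖y‖| ≤ ‖x - y‖ := abs_norm_sub_norm_le x y
  have h3 : ‖x‖ * dist v w ≤ 2 * ‖x - y‖ := by
    have : ‖x‖ * dist v w = ‖(x - y) - (‖x‖ - ‖y‖) • (w : EuclideanSpace ℝ (Fin n))‖ := by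
      rw [Subtype.dist_eq, dist_eq_norm, ← Real.norm_of_nonneg (norm_nonneg x), ← norm_smul]
      rw [Real.norm_of_nonneg (norm_nonneg x), smul_sub, sub_smul, ← hv, ← hw]
      congr 1
      abel
    rw [this]
    refine (norm_sub_le _ _).trans ?_
    rw [norm_smul, hw1, Real.norm_eq_abs]
    linarith
  rw [e1, e2]
  have : ‖x‖ * g v - ‖y‖ * g w = ‖x‖ * (g v - g w) + (‖x‖ - ‖y‖) * g w := by ring
  rw [this]
  refine (abs_add_le _ _).trans ?_
  rw [abs_mul, abs_mul, abs_norm]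
  have a1 := mul_le_mul_of_nonneg_left (hg v w) (norm_nonneg x)
  have a2 := mul_le_mul hd (hb w) (abs_nonneg _) (norm_nonneg _)
  have a3 := mul_le_mul_of_nonneg_left h3 hη.le
  nlinarith

theorem one_sided {n : ℕ} (σ : Measure (sphere (0 : EuclideanSpace ℝ (Fin n)) 1))
    [IsProbabilityMeasure σ]
    (hτ : ∀ O : EuclideanSpace ℝ (Fin n) ≃ₗᵢ[ℝ] EuclideanSpace ℝ (Fin n),
      (σ.map Subtype.val).map O = σ.map Subtype.val)
    (g : sphere (0 : EuclideanSpace ℝ (Fin n)) 1 → ℝ) {η : ℝ} (hη : 0 < η)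
    (hg : ∀ v w, |g v - g w| ≤ η * dist v w) (hb : ∀ v, |g v| ≤ 2 * η)
    (h0 : ∫ v, g v ∂σ = 0) {ε : ℝ} (hε : 0 < ε) :
    σ {v | ε ≤ g v} ≤ ENNReal.ofReal (Real.exp (-(n * ε ^ 2) / (32 * Real.pi * η ^ 2))) := by
  set γ := stdGaussian (EuclideanSpace ℝ (Fin n))
  set τ := σ.map Subtype.val
  have : IsProbabilityMeasure τ := Measure.isProbabilityMeasure_map (by fun_prop)
  have hτ1 : ∀ᵐ v ∂τ, ‖v‖ = 1 := by
    rw [ae_map_iff (by fun_prop) (measurableSet_eq_fun (by fun_prop) (by fun_prop))]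
    exact Filter.Eventually.of_forall fun v => by simp
  have hpol : (γ.prod τ).map (fun p => ‖p.1‖ • p.2) = γ := gauss_polar τ hτ hτ1
  set L := 4 * η with hL
  set m := √n * √(2 / Real.pi) with hm
  have hm0 : 0 ≤ m := by positivity
  set F := homExt g
  have lip : ∀ x y, |F x - F y| ≤ L * ‖x - y‖ := homExt_lip g hη hg hb
  have cF : Continuous F := by
    refine (LipschitzWith.of_dist_le_mul (K := ⟨L, by positivity⟩) fun x y => ?_).continuous
    rw [Real.dist_eq, dist_eq_norm]
    exact lip x y
  have cg : Continuous g := by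
    refine (LipschitzWith.of_dist_le_mul (K := ⟨η, hη.le⟩) fun x y => ?_).continuous
    rw [Real.dist_eq]
    exact hg x y
  set lam := ε * m / (2 * L ^ 2) with hlam
  have hlam0 : 0 ≤ lam := by positivity
  have pol : ∀ c : ℝ, ∫⁻ x, ENNReal.ofReal (Real.exp (c * F x)) ∂γ =
      ∫⁻ x, ∫⁻ v, ENNReal.ofReal (Real.exp (c * (‖x‖ * g v))) ∂σ ∂γ := by
    intro c
    have mF := cF.measurable
    nth_rw 1 [← hpol]
    rw [lintegral_map (by fun_prop) (by fun_prop), lintegral_prod _ (by fun_prop)]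
    congr 1
    ext x
    rw [lintegral_map (by fun_prop) (by fun_prop)]
    congr 1
    ext v
    rw [← homExt_smul g (norm_nonneg x) v]
  have s1 : (∫⁻ x, ENNReal.ofReal (Real.exp (lam * F x)) ∂γ) *
      (∫⁻ x, ENNReal.ofReal (Real.exp (-lam * F x)) ∂γ) ≤
      ENNReal.ofReal (Real.exp (lam ^ 2 * L ^ 2)) := by
    have mF := cF.measurable
    have key := propTau_stdGaussian n
      (fun x => ENNReal.ofReal (Real.exp (-(lam ^ 2 * L ^ 2))) *
        ENNReal.ofReal (Real.exp (lam * F x)))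
      (fun x => ENNReal.ofReal (Real.exp (-lam * F x))) (by fun_prop) (by fun_prop) ?_
    · rw [lintegral_const_mul _ (by fun_prop), mul_assoc] at key
      have := mul_le_mul_right key (ENNReal.ofReal (Real.exp (lam ^ 2 * L ^ 2)))
      rwa [← mul_assoc, ← ENNReal.ofReal_mul (Real.exp_pos _).le, ← Real.exp_add, mul_one,
        add_neg_cancel, Real.exp_zero, ENNReal.ofReal_one, one_mul] at this
    · intro x y
      rw [← ENNReal.ofReal_mul (Real.exp_pos _).le, ← ENNReal.ofReal_mul (by positivity),
        ← Real.exp_add, ← Real.exp_add]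
      apply ENNReal.ofReal_le_ofReal
      apply Real.exp_le_exp.2
      have h1 := (le_abs_self _).trans (lip x y)
      have h2 := mul_le_mul_of_nonneg_left h1 hlam0
      nlinarith [sq_nonneg (‖x - y‖ / 2 - lam * L)]
  have ig : Integrable g σ := Integrable.of_bound (C := 2 * η) (by fun_prop)
    (Filter.Eventually.of_forall hb)
  have s2 : 1 ≤ ∫⁻ x, ENNReal.ofReal (Real.exp (-lam * F x)) ∂γ := by
    rw [pol]
    have : ∀ x : EuclideanSpace ℝ (Fin n),
        1 ≤ ∫⁻ v, ENNReal.ofReal (Real.exp (-lam * (‖x‖ * g v))) ∂σ := by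
      intro x
      have ie : Integrable (fun v => Real.exp (-lam * (‖x‖ * g v))) σ := by
        refine Integrable.of_bound (C := Real.exp (lam * (‖x‖ * (2 * η)))) (by fun_prop)
          (Filter.Eventually.of_forall fun v => ?_)
        rw [Real.norm_of_nonneg (Real.exp_pos _).le]
        apply Real.exp_le_exp.2
        have h1 := (abs_le.1 (hb v)).1
        have h2 : 0 ≤ lam * ‖x‖ := by positivity
        nlinarith
      rw [← ofReal_integral_eq_lintegral_ofReal ie
        (Filter.Eventually.of_forall fun v => (Real.exp_pos _).le)]
      rw [ENNReal.one_le_ofReal]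
      calc (1:ℝ) = ∫ v, ((-lam * ‖x‖) * g v + 1) ∂σ := by
            rw [integral_add (ig.const_mul _) (integrable_const _), integral_const_mul, h0]
            simp
        _ ≤ _ := by
            refine integral_mono ((ig.const_mul _).add (integrable_const _)) ie fun v => ?_
            have := Real.add_one_le_exp (-lam * (‖x‖ * g v))
            simp only
            linarith
    calc (1:ENNReal) = ∫⁻ x, 1 ∂γ := by simp [γ]
      _ ≤ _ := lintegral_mono this
  have s3 : σ {v | ε ≤ g v} * ENNReal.ofReal (Real.exp (lam * ε * m)) ≤
      ∫⁻ x, ENNReal.ofReal (Real.exp (lam * F x)) ∂γ := by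
    rw [pol]
    have h1 : ∀ x : EuclideanSpace ℝ (Fin n),
        σ {v | ε ≤ g v} * ENNReal.ofReal (Real.exp (lam * ε * m) *
          (lam * ε * ‖x‖ - lam * ε * m + 1)) ≤
        ∫⁻ v, ENNReal.ofReal (Real.exp (lam * (‖x‖ * g v))) ∂σ := by
      intro x
      rw [mul_comm, ← setLIntegral_const]
      refine (setLIntegral_mono (by fun_prop) ?_).trans (setLIntegral_le_lintegral _ _)
      intro v hv
      simp only [Set.mem_ofPred_eq] at hv
      apply ENNReal.ofReal_le_ofReal
      calc _ ≤ Real.exp (lam * ε * m) * Real.exp (lam * ε * ‖x‖ - lam * ε * m) := by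
            gcongr
            exact Real.add_one_le_exp _
        _ = Real.exp (lam * ε * ‖x‖) := by
            rw [← Real.exp_add]
            congr 1
            ring
        _ ≤ _ := by
            apply Real.exp_le_exp.2
            have h2 : 0 ≤ lam * ‖x‖ := by positivity
            nlinarith
    refine le_trans ?_ (lintegral_mono h1)
    rw [lintegral_const_mul _ (by fun_prop)]
    gcongr
    have ix := integrable_norm_stdGaussian n
    have ia : Integrable (fun x : EuclideanSpace ℝ (Fin n) =>
        Real.exp (lam * ε * m) * (lam * ε * ‖x‖ - lam * ε * m + 1)) γ :=
      (((ix.const_mul _).sub (integrable_const _)).add (integrable_const _)).const_mul _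
    refine le_trans ?_ (ofReal_integral_le_lintegral_ofReal_aux ia)
    apply ENNReal.ofReal_le_ofReal
    have ie : ∫ x : EuclideanSpace ℝ (Fin n),
        Real.exp (lam * ε * m) * (lam * ε * ‖x‖ - lam * ε * m + 1) ∂γ =
        Real.exp (lam * ε * m) * (lam * ε * (∫ x, ‖x‖ ∂γ) - lam * ε * m + 1) := by
      have ix1 : Integrable (fun x : EuclideanSpace ℝ (Fin n) => lam * ε * ‖x‖) γ := ix.const_mul _
      have ix2 : Integrable (fun x : EuclideanSpace ℝ (Fin n) => lam * ε * ‖x‖ - lam * ε * m) γ :=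
        ix1.sub (integrable_const _)
      rw [integral_const_mul, integral_add ix2 (integrable_const _),
        integral_sub ix1 (integrable_const _), integral_const_mul]
      simp [γ]
    rw [ie]
    refine le_mul_of_one_le_right (Real.exp_pos _).le ?_
    have h2 := mul_le_mul_of_nonneg_left (norm_stdGaussian_ge n) (mul_nonneg hlam0 hε.le)
    linarith
  have s4 : σ {v | ε ≤ g v} * ENNReal.ofReal (Real.exp (lam * ε * m)) ≤
      ENNReal.ofReal (Real.exp (lam ^ 2 * L ^ 2)) := by
    refine le_trans ?_ s1
    calc _ = σ {v | ε ≤ g v} * ENNReal.ofReal (Real.exp (lam * ε * m)) * 1 := by rw [mul_one]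
      _ ≤ _ := mul_le_mul' s3 s2
  have s5 := mul_le_mul_left s4 (ENNReal.ofReal (Real.exp (-(lam * ε * m))))
  rw [mul_assoc, ← ENNReal.ofReal_mul (Real.exp_pos _).le,
    ← ENNReal.ofReal_mul (Real.exp_pos _).le, ← Real.exp_add, ← Real.exp_add, add_neg_cancel,
    Real.exp_zero, ENNReal.ofReal_one, mul_one] at s5
  refine s5.trans (le_of_eq ?_)
  congr 2
  have hm2 : m ^ 2 = n * (2 / Real.pi) := by
    rw [hm, mul_pow, Real.sq_sqrt (by positivity), Real.sq_sqrt (by positivity)]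
  have hL0 : L ≠ 0 := by positivity
  have : lam ^ 2 * L ^ 2 + -(lam * ε * m) = -(ε ^ 2 * m ^ 2) / (4 * L ^ 2) := by
    rw [hlam]
    field_simp
    ring
  rw [this, hm2, hL]
  have := Real.pi_pos
  field_simp
  ring

open MeasureTheory Metric

/-- **Lévy's lemma.** Let `σ` be the uniform (i.e. rotation-invariant) Borel probability
measure on the unit sphere `S^{2D−1} ⊂ ℝ^{2D}`, and let `f` be an `η`-Lipschitz real function
on the sphere. Then `σ({v : |f(v) − ∫ f dσ| ≥ ε}) ≤ 2 exp(−2Dε²/(9π³η²))` for all `ε > 0`. -/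
theorem levys_lemma (D : ℕ) (hD : 1 ≤ D)
    (σ : Measure (sphere (0 : EuclideanSpace ℝ (Fin (2 * D))) 1)) [IsProbabilityMeasure σ]
    (hσ : ∀ O : EuclideanSpace ℝ (Fin (2 * D)) ≃ₗᵢ[ℝ] EuclideanSpace ℝ (Fin (2 * D)),
      σ.map (fun v : sphere (0 : EuclideanSpace ℝ (Fin (2 * D))) 1 =>
        (⟨O v, by
          have hv : ‖(v : EuclideanSpace ℝ (Fin (2 * D)))‖ = 1 := by
            have := v.2; simp only [mem_sphere_iff_norm, sub_zero] at this; exact this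
          simp [mem_sphere_iff_norm, O.norm_map, hv]⟩ :
          sphere (0 : EuclideanSpace ℝ (Fin (2 * D))) 1)) = σ)
    (f : sphere (0 : EuclideanSpace ℝ (Fin (2 * D))) 1 → ℝ) (η : ℝ) (hη : 0 < η)
    (hf : ∀ v w : sphere (0 : EuclideanSpace ℝ (Fin (2 * D))) 1,
      |f v - f w| ≤ η * dist v w)
    (ε : ℝ) (hε : 0 < ε) :
    σ {v | ε ≤ |f v - ∫ w, f w ∂σ|}
      ≤ ENNReal.ofReal (2 * Real.exp (-(2 * D * ε ^ 2) / (9 * Real.pi ^ 3 * η ^ 2))) := by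
  have hτ : ∀ O : EuclideanSpace ℝ (Fin (2 * D)) ≃ₗᵢ[ℝ] EuclideanSpace ℝ (Fin (2 * D)),
      (σ.map Subtype.val).map O = σ.map Subtype.val := by
    intro O
    conv_rhs => rw [← hσ O]
    rw [Measure.map_map (by fun_prop) (by fun_prop), Measure.map_map (by fun_prop)
      (Measurable.subtype_mk (by fun_prop))]
    rfl
  have cf : Continuous f := by
    refine (LipschitzWith.of_dist_le_mul (K := ⟨η, hη.le⟩) fun x y => ?_).continuous
    rw [Real.dist_eq]
    exact hf x y
  have hd : ∀ v w : sphere (0 : EuclideanSpace ℝ (Fin (2 * D))) 1, |f v - f w| ≤ 2 * η := by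
    intro v w
    have h1 : dist v w ≤ 2 := by
      rw [Subtype.dist_eq, dist_eq_norm]
      refine (norm_sub_le _ _).trans ?_
      simp
      norm_num
    nlinarith [hf v w]
  have hne : Nonempty (sphere (0 : EuclideanSpace ℝ (Fin (2 * D))) 1) :=
    nonempty_of_isProbabilityMeasure σ
  obtain ⟨v0⟩ := hne
  have hif : Integrable f σ := by
    refine Integrable.of_bound (C := |f v0| + 2 * η) (by fun_prop)
      (Filter.Eventually.of_forall fun v => ?_)
    rw [Real.norm_eq_abs]
    have := abs_add_le (f v0) (f v - f v0)
    rw [add_sub_cancel] at this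
    linarith [hd v v0]
  set M := ∫ w, f w ∂σ with hM
  have hb : ∀ v, |f v - M| ≤ 2 * η := by
    intro v
    have : f v - M = ∫ w, (f v - f w) ∂σ := by
      rw [integral_sub (integrable_const _) hif]
      simp [hM]
    rw [this]
    have h2 := norm_integral_le_of_norm_le_const (μ := σ) (f := fun w => f v - f w)
      (Filter.Eventually.of_forall fun w => hd v w)
    simpa using h2
  have h1 := one_sided σ hτ (fun v => f v - M) hη (fun v w => by simpa using hf v w) hb
    (by rw [integral_sub hif (integrable_const _)]; simp [hM]) hε
  have h2 := one_sided σ hτ (fun v => M - f v) hη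
    (fun v w => by
      have := hf w v
      rw [dist_comm] at this
      simpa using this)
    (fun v => by rw [abs_sub_comm]; exact hb v)
    (by rw [integral_sub (integrable_const _) hif]; simp [hM]) hε
  have hsub : {v | ε ≤ |f v - M|} ⊆ {v | ε ≤ f v - M} ∪ {v | ε ≤ M - f v} := by
    intro v hv
    rcases le_abs.1 (show ε ≤ |f v - M| from hv) with h | h
    · exact Or.inl h
    · right
      change ε ≤ M - f v
      linarith
  refine (measure_mono hsub).trans ((measure_union_le _ _).trans ((add_le_add h1 h2).trans ?_))
  rw [← ENNReal.ofReal_add (Real.exp_pos _).le (Real.exp_pos _).le, ← two_mul]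
  apply ENNReal.ofReal_le_ofReal
  have hpi := Real.pi_pos
  have hpi3 := Real.pi_gt_three
  refine mul_le_mul_of_nonneg_left (Real.exp_le_exp.2 ?_) (by norm_num)
  push_cast
  rw [neg_div, neg_div, neg_le_neg_iff]
  refine div_le_div_of_nonneg_left (by positivity) (by positivity) ?_
  refine mul_le_mul_of_nonneg_right ?_ (by positivity)
  nlinarith [mul_pos hpi hpi, mul_pos hpi (mul_pos hpi hpi)]
end
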